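/- arXiv:1507.08920 — 3 statements merged into one kernel-verified Lean document; each statement's English description precedes it below -/
import Mathlib

section
/- Let N ≥ 1, let n_0,…,n_{N−1} be positive integers, and let σ > 0, T^col > 0 and T_i^succ > 0 (0 ≤ i ≤ N−1) be real constants. For η ∈ ℝ^N define X(η) = σ/T^col + Σ_{i=0}^{N−1} n_i (T_i^succ/T^col − 1) e^{η_i} + Π_{i=0}^{N−1} (1 + e^{η_i})^{n_i} − 1. Then the function U_1(η) = Σ_{i=0}^{N−1} n_i (η_i − log X(η)) is concave on ℝ^N. -/
/-!
The coefficients `T_i^succ/T^col - 1` of the linear part of `X` may be negative. Each `-1` is,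
however, compensated by the expansion of the product: `∏ (1 + α_i)^{n_i} - 1 - ∑ n_i α_i` is a
polynomial in the `α_i` with nonnegative coefficients. Hence `X` is a polynomial with nonnegative
coefficients in the exponentials `e^{η_i}`, and such functions are log-convex because log-convexity
is preserved by products and, by Hölder's inequality, by sums. So `U₁` is a linear function minus a
nonnegative multiple of the convex function `log X`.
-/

open Finset

theorem concaveOn_sum {𝕜 E β ι : Type*} [Semiring 𝕜] [PartialOrder 𝕜] [AddCommMonoid E]
    [SMul 𝕜 E] [AddCommMonoid β] [PartialOrder β] [IsOrderedAddMonoid β] [Module 𝕜 β]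
    {s : Set E} (hs : Convex 𝕜 s) (t : Finset ι) {f : ι → E → β}
    (hf : ∀ i ∈ t, ConcaveOn 𝕜 s (f i)) : ConcaveOn 𝕜 s fun x => ∑ i ∈ t, f i x := by
  classical
  induction t using Finset.induction_on with
  | empty => simpa using concaveOn_const (0 : β) hs
  | insert j t hj ih =>
    simp only [sum_insert hj]
    exact (hf j (mem_insert_self j t)).add (ih fun i hi => hf i (mem_insert_of_mem hi))

theorem rpow_mul_rpow_add_rpow_mul_rpow_le {u v w z a b : ℝ} (hu : 0 ≤ u) (hv : 0 ≤ v)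
    (hw : 0 ≤ w) (hz : 0 ≤ z) (ha : 0 ≤ a) (hb : 0 ≤ b) (hab : a + b = 1) :
    u ^ a * v ^ b + w ^ a * z ^ b ≤ (u + w) ^ a * (v + z) ^ b := by
  obtain rfl | ha := ha.eq_or_lt
  · obtain rfl : b = 1 := by linarith
    simp
  obtain rfl | hb := hb.eq_or_lt
  · obtain rfl : a = 1 := by linarith
    simp
  have holder := Real.inner_le_Lp_mul_Lq_of_nonneg univ (Real.HolderConjugate.inv_inv ha hb hab)
    (f := ![u ^ a, w ^ a]) (g := ![v ^ b, z ^ b])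
    (by simp [Fin.forall_fin_two, Real.rpow_nonneg, hu, hw])
    (by simp [Fin.forall_fin_two, Real.rpow_nonneg, hv, hz])
  simpa [Fin.sum_univ_two, Real.rpow_rpow_inv, hu, hv, hw, hz, ha.ne', hb.ne'] using holder

/-- Logarithmic convexity, written multiplicatively so that `f` may vanish; the zero function does
occur, as an empty sum and as the remainder `(1 + α) - 1 - α`. The convention `0 ^ 0 = 1` makes the
cases `a = 0` and `b = 0` of the inequality trivial. -/
structure LogConvexOn {E : Type*} [AddCommMonoid E] [SMul ℝ E] (s : Set E) (f : E → ℝ) :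
    Prop where
  convex : Convex ℝ s
  nonneg : ∀ ⦃x⦄, x ∈ s → 0 ≤ f x
  map_le : ∀ ⦃x⦄, x ∈ s → ∀ ⦃y⦄, y ∈ s → ∀ ⦃a b : ℝ⦄, 0 ≤ a → 0 ≤ b → a + b = 1 →
    f (a • x + b • y) ≤ f x ^ a * f y ^ b

namespace LogConvexOn

variable {E ι : Type*} [AddCommMonoid E] [SMul ℝ E] {s : Set E} {f g : E → ℝ} {F : ι → E → ℝ}

theorem const (hs : Convex ℝ s) {c : ℝ} (hc : 0 ≤ c) : LogConvexOn s fun _ => c where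
  convex := hs
  nonneg _ _ := hc
  map_le x _ y _ a b ha hb hab := by
    rw [← Real.rpow_add_of_nonneg hc ha hb, hab, Real.rpow_one]

theorem exp (hf : ConvexOn ℝ s f) : LogConvexOn s fun x => Real.exp (f x) where
  convex := hf.1
  nonneg _ _ := Real.exp_nonneg _
  map_le x hx y hy a b ha hb hab := by
    rw [← Real.exp_mul, ← Real.exp_mul, ← Real.exp_add, mul_comm (f x), mul_comm (f y)]
    exact Real.exp_le_exp.mpr (hf.2 hx hy ha hb hab)

theorem convexOn_log (hf : LogConvexOn s f) (hpos : ∀ x ∈ s, 0 < f x) :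
    ConvexOn ℝ s fun x => Real.log (f x) := by
  refine ⟨hf.convex, fun x hx y hy a b ha hb hab => ?_⟩
  have hfx := hpos x hx
  have hfy := hpos y hy
  calc Real.log (f (a • x + b • y))
      ≤ Real.log (f x ^ a * f y ^ b) :=
        Real.log_le_log (hpos _ (hf.convex hx hy ha hb hab)) (hf.map_le hx hy ha hb hab)
    _ = a * Real.log (f x) + b * Real.log (f y) := by
        rw [Real.log_mul (by positivity) (by positivity), Real.log_rpow hfx, Real.log_rpow hfy]

theorem concaveOn_sum_mul_sub_log (hf : LogConvexOn s f) (t : Finset ι)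
    (hpos : ∀ x ∈ s, 0 < f x) {G : ι → E → ℝ} (hG : ∀ i ∈ t, ConcaveOn ℝ s (G i)) {w : ι → ℝ}
    (hw : ∀ i ∈ t, 0 ≤ w i) :
    ConcaveOn ℝ s fun x => ∑ i ∈ t, w i * (G i x - Real.log (f x)) :=
  concaveOn_sum hf.convex t fun i hi => ((hG i hi).sub (hf.convexOn_log hpos)).smul (hw i hi)

theorem mul (hf : LogConvexOn s f) (hg : LogConvexOn s g) :
    LogConvexOn s fun x => f x * g x where
  convex := hf.convex
  nonneg _ hx := mul_nonneg (hf.nonneg hx) (hg.nonneg hx)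
  map_le x hx y hy a b ha hb hab := by
    have hfx := hf.nonneg hx
    have hfy := hf.nonneg hy
    have hgz := hg.nonneg (hf.convex hx hy ha hb hab)
    calc f (a • x + b • y) * g (a • x + b • y)
        ≤ (f x ^ a * f y ^ b) * (g x ^ a * g y ^ b) := by
          gcongr
          exacts [hf.map_le hx hy ha hb hab, hg.map_le hx hy ha hb hab]
      _ = (f x * g x) ^ a * (f y * g y) ^ b := by
          rw [Real.mul_rpow hfx (hg.nonneg hx), Real.mul_rpow hfy (hg.nonneg hy)]
          ring

theorem add (hf : LogConvexOn s f) (hg : LogConvexOn s g) :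
    LogConvexOn s fun x => f x + g x where
  convex := hf.convex
  nonneg _ hx := add_nonneg (hf.nonneg hx) (hg.nonneg hx)
  map_le _ hx _ hy _ _ ha hb hab :=
    (add_le_add (hf.map_le hx hy ha hb hab) (hg.map_le hx hy ha hb hab)).trans <|
      rpow_mul_rpow_add_rpow_mul_rpow_le (hf.nonneg hx) (hf.nonneg hy) (hg.nonneg hx)
        (hg.nonneg hy) ha hb hab

theorem sum (hs : Convex ℝ s) (t : Finset ι) (hF : ∀ i ∈ t, LogConvexOn s (F i)) :
    LogConvexOn s fun x => ∑ i ∈ t, F i x := by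
  classical
  induction t using Finset.induction_on with
  | empty => simpa using const hs le_rfl
  | insert j t hj ih =>
    simp only [sum_insert hj]
    exact (hF j (mem_insert_self j t)).add (ih fun i hi => hF i (mem_insert_of_mem hi))

theorem prod_one_add_sub_one_sub_sum (hs : Convex ℝ s) (t : Finset ι)
    (hF : ∀ i ∈ t, LogConvexOn s (F i)) :
    LogConvexOn s fun x => ∏ i ∈ t, (1 + F i x) - 1 - ∑ i ∈ t, F i x := by
  classical
  induction t using Finset.induction_on with
  | empty => simpa using const hs le_rfl
  | insert j t hj ih =>
    have hFj := hF j (mem_insert_self j t)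
    have hFt : ∀ i ∈ t, LogConvexOn s (F i) := fun i hi => hF i (mem_insert_of_mem hi)
    -- With `R = ∏ (1 + F i) - 1 - ∑ F i` over `t`, the remainder over `insert j t` is
    -- `R + F j * (∑ F i + R)`, in which no subtraction is left.
    convert (ih hFt).add (hFj.mul ((sum hs t hFt).add (ih hFt))) using 2
    rw [sum_insert hj, prod_insert hj]
    ring

theorem prod_one_add_pow_sub_one_sub_sum [Fintype ι] (hs : Convex ℝ s) (n : ι → ℕ)
    (hF : ∀ i, LogConvexOn s (F i)) :
    LogConvexOn s fun x => ∏ i, (1 + F i x) ^ n i - 1 - ∑ i, n i * F i x := by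
  -- List each factor `1 + F i` separately, once for each of its `n i` occurrences.
  simpa only [Fintype.prod_sigma, Fintype.sum_sigma, prod_const, sum_const, card_univ,
    Fintype.card_fin, nsmul_eq_mul] using
    prod_one_add_sub_one_sub_sum hs univ fun (p : Σ i, Fin (n i)) _ => hF p.1

end LogConvexOn

/-- The part of the normalised expected slot duration `X` due to slots with at least one attempt,
so that `X = σ / T^col + busyDuration t n α`, in terms of the attempt quantities `α i` (which are
`e^{η_i}` in the paper) and of the normalised success durations `t i = T_i^succ / T^col`. -/
def busyDuration {ι : Type*} [Fintype ι] (t : ι → ℝ) (n : ι → ℕ) (α : ι → ℝ) : ℝ :=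
  ∑ i, n i * (t i - 1) * α i + ∏ i, (1 + α i) ^ n i - 1

theorem busyDuration_eq_sum_add_remainder {ι : Type*} [Fintype ι] (t : ι → ℝ) (n : ι → ℕ)
    (α : ι → ℝ) :
    busyDuration t n α =
      ∑ i, n i * t i * α i + (∏ i, (1 + α i) ^ n i - 1 - ∑ i, n i * α i) := by
  simp only [busyDuration, mul_sub, sub_mul, mul_one, sum_sub_distrib]
  ring

theorem LogConvexOn.busyDuration {E ι : Type*} [AddCommMonoid E] [SMul ℝ E] [Fintype ι]
    {s : Set E} (hs : Convex ℝ s) {t : ι → ℝ} (ht : ∀ i, 0 ≤ t i) (n : ι → ℕ) {F : ι → E → ℝ}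
    (hF : ∀ i, LogConvexOn s (F i)) : LogConvexOn s fun x => busyDuration t n fun i => F i x := by
  simp only [busyDuration_eq_sum_add_remainder]
  have hlinear : LogConvexOn s fun x => ∑ i, n i * t i * F i x :=
    .sum hs univ fun i _ => (const hs (mul_nonneg (n i).cast_nonneg (ht i))).mul (hF i)
  exact hlinear.add (prod_one_add_pow_sub_one_sub_sum hs n hF)

theorem U1_concave_general {ι : Type*} [Fintype ι] {w : ι → ℝ} (hw : ∀ i, 0 ≤ w i) (n : ι → ℕ)
    {c : ℝ} (hc : 0 < c) {t : ι → ℝ} (ht : ∀ i, 0 ≤ t i) :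
    ConcaveOn ℝ Set.univ fun η : ι → ℝ =>
      ∑ i, w i * (η i - Real.log (c + busyDuration t n fun j => Real.exp (η j))) := by
  have hbusy : LogConvexOn Set.univ fun η : ι → ℝ => busyDuration t n fun j => Real.exp (η j) :=
    .busyDuration convex_univ ht n fun j => .exp ((LinearMap.proj j).convexOn convex_univ)
  have hslot : LogConvexOn Set.univ fun η : ι → ℝ =>
      c + busyDuration t n fun j => Real.exp (η j) :=
    (LogConvexOn.const convex_univ hc.le).add hbusy
  exact hslot.concaveOn_sum_mul_sub_log univ
    (fun _ hη => add_pos_of_pos_of_nonneg hc (hbusy.nonneg hη))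
    (fun i _ => (LinearMap.proj i).concaveOn convex_univ) fun i _ => hw i

/-- Lemma 1 of the paper. Let `N ≥ 1`, `n_0, …, n_{N-1}` positive integers,
and `σ > 0`, `T^col > 0`, `T_i^succ > 0` real constants. With
`X(η) = σ/T^col + Σ_i n_i (T_i^succ/T^col − 1) e^{η_i} + Π_i (1 + e^{η_i})^{n_i} − 1`,
the function `U₁(η) = Σ_i n_i (η_i − log X(η))` is concave on `ℝ^N`. -/
theorem U1_concave (N : ℕ) (hN : 1 ≤ N) (n : Fin N → ℕ) (hn : ∀ i, 0 < n i)
    (σ Tcol : ℝ) (Ts : Fin N → ℝ) (hσ : 0 < σ) (hTcol : 0 < Tcol) (hTs : ∀ i, 0 < Ts i)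
    (X U1 : (Fin N → ℝ) → ℝ)
    (hX : ∀ η, X η = σ / Tcol + ∑ i, (n i : ℝ) * (Ts i / Tcol - 1) * Real.exp (η i)
        + ∏ i, (1 + Real.exp (η i)) ^ (n i) - 1)
    (hU1 : ∀ η, U1 η = ∑ i, (n i : ℝ) * (η i - Real.log (X η))) :
    ConcaveOn ℝ Set.univ U1 := by
  have hX_busy (η : Fin N → ℝ) :
      X η = σ / Tcol + busyDuration (fun i => Ts i / Tcol) n fun i => Real.exp (η i) := by
    rw [hX, busyDuration]
    ring
  simpa only [← hX_busy, ← hU1] using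
    U1_concave_general (fun i => (n i).cast_nonneg) n (div_pos hσ hTcol)
      fun i => (div_pos (hTs i) hTcol).le
end

section
/- Let N ≥ 1, let n_0,…,n_{N−1} be positive integers, let σ > 0, T^col > 0, T_i^succ > 0 be real, and let τ_i ∈ (0,1) for 0 ≤ i ≤ N−1; set α_i = τ_i/(1−τ_i). Define P^idle = Π_{i} (1−τ_i)^{n_i}, P_i^succ = τ_i (1−τ_i)^{n_i−1} Π_{j≠i} (1−τ_j)^{n_j}, P^succ = Σ_i n_i P_i^succ, P_i^col = 1 − (1−τ_i)^{n_i−1} Π_{j≠i}(1−τ_j)^{n_j}, and X = σ/T^col + Σ_i n_i (T_i^succ/T^col − 1) α_i + Π_i (1+α_i)^{n_i} − 1. Then the flow total air-time T_i^air = ( P_i^succ T_i^succ + τ_i P_i^col T^col ) / ( P^idle σ + Σ_j n_j P_j^succ T_j^succ + (1 − P^idle − P^succ) T^col ) satisfies T_i^air = (1/X) · ( α_i (T_i^succ/T^col − 1) + τ_i / P^idle ). -/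
/-!
The mean slot time and the mean channel time taken per slot by a flow are both divisible by
`P^idle T^col`. Pulling out `P^idle` is what makes the odds `α_i = τ_i/(1−τ_i)` appear: success
means exactly one attempt, so `P_i^succ = α_i P^idle`, and `1 + α_i = 1/(1−τ_i)`, so
`∏ (1+α_i)^{n_i} = 1/P^idle`. The quotient of the mean slot time by `P^idle T^col` is `X`, which
is positive because Weierstrass' product inequality bounds `∏ (1+α_i)^{n_i}` below by
`1 + ∑ n_i α_i`.
-/

section ProductInequality

open Finset

variable {ι R : Type*} [CommSemiring R] [PartialOrder R] [IsOrderedRing R]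

theorem one_add_sum_le_prod_one_add (s : Finset ι) {f : ι → R} (hf : ∀ i ∈ s, 0 ≤ f i) :
    1 + ∑ i ∈ s, f i ≤ ∏ i ∈ s, (1 + f i) := by
  classical
  induction s using Finset.induction_on with
  | empty => simp
  | insert a s ha ih =>
    obtain ⟨hfa, hfs⟩ := (forall_mem_insert _ _ _).1 hf
    rw [sum_insert ha, prod_insert ha]
    calc 1 + (f a + ∑ i ∈ s, f i)
        ≤ 1 + (f a + ∑ i ∈ s, f i) + f a * ∑ i ∈ s, f i :=
          le_add_of_nonneg_right (mul_nonneg hfa (sum_nonneg hfs))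
      _ = (1 + f a) * (1 + ∑ i ∈ s, f i) := by ring
      _ ≤ (1 + f a) * ∏ i ∈ s, (1 + f i) :=
          mul_le_mul_of_nonneg_left (ih hfs) (add_nonneg zero_le_one hfa)

theorem one_add_sum_mul_le_prod_one_add_pow (s : Finset ι) (n : ι → ℕ) {f : ι → R}
    (hf : ∀ i ∈ s, 0 ≤ f i) :
    1 + ∑ i ∈ s, n i * f i ≤ ∏ i ∈ s, (1 + f i) ^ n i := by
  have hnf : ∀ i ∈ s, 0 ≤ n i * f i := fun i hi => mul_nonneg (n i).cast_nonneg (hf i hi)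
  refine (one_add_sum_le_prod_one_add s hnf).trans (prod_le_prod ?_ ?_)
  · exact fun i hi => add_nonneg zero_le_one (hnf i hi)
  · intro i hi
    have hone : 0 ≤ 1 + f i := add_nonneg zero_le_one (hf i hi)
    have htwo : 0 ≤ 2 + f i := add_nonneg zero_le_two (hf i hi)
    exact one_add_mul_le_pow_of_sq_nonneg (pow_nonneg (hf i hi) 2) (pow_nonneg hone 2) htwo (n i)

end ProductInequality

/-- The parameters of a slotted random-access channel whose stations are grouped into access
categories indexed by `ι`: the number of stations and the attempt probability `τ_i` of each
category, and the durations `σ`, `T^col` and `T_i^succ`. Values lie in an arbitrary type `K`, since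
most of the theory is algebraic; ranges such as `τ_i ∈ (0,1)` are imposed by the results. -/
structure SlottedChannel (ι K : Type*) where
  stations : ι → ℕ
  attemptProb : ι → K
  slotTime : K
  collTime : K
  succTime : ι → K

namespace SlottedChannel

open Finset

section AttemptOdds

variable {ι K : Type*} [Field K]

/-- The odds `α_i = τ_i/(1−τ_i)` that a station of category `i` attempts transmission. -/
def attemptOdds (W : SlottedChannel ι K) (i : ι) : K :=
  W.attemptProb i / (1 - W.attemptProb i)

variable {W : SlottedChannel ι K} {i : ι}

theorem one_add_attemptOdds (hτ : W.attemptProb i ≠ 1) :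
    1 + W.attemptOdds i = (1 - W.attemptProb i)⁻¹ := by
  have hq : 1 - W.attemptProb i ≠ 0 := sub_ne_zero.2 hτ.symm
  rw [attemptOdds]
  field_simp
  ring

theorem attemptOdds_nonneg [LinearOrder K] [IsStrictOrderedRing K]
    (hτ : W.attemptProb i ∈ Set.Ico 0 1) : 0 ≤ W.attemptOdds i :=
  div_nonneg hτ.1 (sub_nonneg.2 hτ.2.le)

end AttemptOdds

section Field

variable {ι K : Type*} [Fintype ι] [Field K] (W : SlottedChannel ι K)

/-- `P^idle`, the probability that no station attempts transmission in a slot. -/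
def idleProb : K :=
  ∏ i, (1 - W.attemptProb i) ^ W.stations i

/-- The quantity `X`: the mean slot time in units of `P^idle T^col`
(see `meanSlotTime_eq_idleProb_mul_collTime_mul`). -/
def normalizedSlotTime : K :=
  W.slotTime / W.collTime
    + ∑ i, W.stations i * (W.succTime i / W.collTime - 1) * W.attemptOdds i
    + ∏ i, (1 + W.attemptOdds i) ^ W.stations i - 1

variable {W}

theorem idleProb_ne_zero (hτ : ∀ i, W.attemptProb i ≠ 1) : W.idleProb ≠ 0 :=
  prod_ne_zero_iff.2 fun i _ => pow_ne_zero _ (sub_ne_zero.2 (hτ i).symm)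

theorem prod_one_add_attemptOdds_pow (hτ : ∀ i, W.attemptProb i ≠ 1) :
    ∏ i, (1 + W.attemptOdds i) ^ W.stations i = W.idleProb⁻¹ := by
  simp only [idleProb, one_add_attemptOdds (hτ _), inv_pow, prod_inv_distrib]

variable [DecidableEq ι] (W)

/-- The probability that all stations other than a given one of category `i` stay silent in a slot.
The truncated subtraction in the exponent makes it meaningful only if category `i` is nonempty. -/
def othersIdleProb (i : ι) : K :=
  (1 - W.attemptProb i) ^ (W.stations i - 1)
    * ∏ j ∈ univ.erase i, (1 - W.attemptProb j) ^ W.stations j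

/-- `P_i^succ`, the probability that a given station of category `i` transmits successfully in a
slot. -/
def succProb (i : ι) : K :=
  W.attemptProb i * W.othersIdleProb i

/-- `P^succ`, the probability that a slot carries a successful transmission. -/
def totalSuccProb : K :=
  ∑ i, W.stations i * W.succProb i

/-- `P_i^col`, the probability that a transmission attempt of category `i` collides. -/
def collProb (i : ι) : K :=
  1 - W.othersIdleProb i

/-- The mean duration of a slot, whether idle, successful or collided. -/
def meanSlotTime : K :=
  W.idleProb * W.slotTime + ∑ i, W.stations i * W.succProb i * W.succTime i
    + (1 - W.idleProb - W.totalSuccProb) * W.collTime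

/-- The mean channel time per slot taken by a flow of category `i`, in successes and collisions. -/
def meanFlowTime (i : ι) : K :=
  W.succProb i * W.succTime i + W.attemptProb i * W.collProb i * W.collTime

/-- `T_i^air`, the fraction of time used by a flow of category `i`. -/
def airTime (i : ι) : K :=
  W.meanFlowTime i / W.meanSlotTime

theorem attemptProb_mul_collProb (i : ι) :
    W.attemptProb i * W.collProb i = W.attemptProb i - W.succProb i := by
  rw [collProb, succProb, mul_one_sub]

variable {W}

theorem one_sub_attemptProb_mul_othersIdleProb {i : ι} (hn : W.stations i ≠ 0) :
    (1 - W.attemptProb i) * W.othersIdleProb i = W.idleProb := by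
  rw [othersIdleProb, ← mul_assoc, mul_pow_sub_one hn]
  exact mul_prod_erase univ (fun j => (1 - W.attemptProb j) ^ W.stations j) (mem_univ i)

theorem succProb_eq_attemptOdds_mul_idleProb {i : ι} (hn : W.stations i ≠ 0)
    (hτ : W.attemptProb i ≠ 1) : W.succProb i = W.attemptOdds i * W.idleProb := by
  rw [succProb, attemptOdds, ← one_sub_attemptProb_mul_othersIdleProb hn, ← mul_assoc,
    div_mul_cancel₀ _ (sub_ne_zero.2 hτ.symm)]

theorem meanFlowTime_eq_idleProb_mul_collTime_mul {i : ι} (hn : W.stations i ≠ 0)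
    (hτ : ∀ j, W.attemptProb j ≠ 1) (hT : W.collTime ≠ 0) :
    W.meanFlowTime i = W.idleProb * W.collTime *
      (W.attemptOdds i * (W.succTime i / W.collTime - 1) + W.attemptProb i / W.idleProb) := by
  have hP : W.idleProb ≠ 0 := idleProb_ne_zero hτ
  rw [meanFlowTime, attemptProb_mul_collProb, succProb_eq_attemptOdds_mul_idleProb hn (hτ i)]
  field_simp
  ring

theorem sum_succTime_sub_totalSuccProb_mul_collTime (hn : ∀ i, W.stations i ≠ 0)
    (hτ : ∀ i, W.attemptProb i ≠ 1) (hT : W.collTime ≠ 0) :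
    ∑ i, W.stations i * W.succProb i * W.succTime i - W.totalSuccProb * W.collTime =
      W.idleProb * W.collTime *
        ∑ i, W.stations i * (W.succTime i / W.collTime - 1) * W.attemptOdds i := by
  rw [totalSuccProb, sum_mul, ← sum_sub_distrib, mul_sum]
  refine sum_congr rfl fun i _ => ?_
  rw [succProb_eq_attemptOdds_mul_idleProb (hn i) (hτ i)]
  field_simp

theorem meanSlotTime_eq_idleProb_mul_collTime_mul (hn : ∀ i, W.stations i ≠ 0)
    (hτ : ∀ i, W.attemptProb i ≠ 1) (hT : W.collTime ≠ 0) :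
    W.meanSlotTime = W.idleProb * W.collTime * W.normalizedSlotTime := by
  have hslot : W.collTime * (W.slotTime / W.collTime) = W.slotTime := mul_div_cancel₀ _ hT
  have hidle : W.idleProb * W.idleProb⁻¹ = 1 := mul_inv_cancel₀ (idleProb_ne_zero hτ)
  rw [meanSlotTime, normalizedSlotTime, prod_one_add_attemptOdds_pow hτ]
  linear_combination sum_succTime_sub_totalSuccProb_mul_collTime hn hτ hT
    - W.collTime * hidle - W.idleProb * hslot

end Field

section Order

variable {ι K : Type*} [Fintype ι] [Field K] [LinearOrder K] [IsStrictOrderedRing K]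
  {W : SlottedChannel ι K}

theorem normalizedSlotTime_pos (hτ : ∀ i, W.attemptProb i ∈ Set.Ico 0 1) (hσ : 0 < W.slotTime)
    (hT : 0 < W.collTime) (hTs : ∀ i, 0 ≤ W.succTime i) : 0 < W.normalizedSlotTime := by
  have hα : ∀ i, 0 ≤ W.attemptOdds i := fun i => attemptOdds_nonneg (hτ i)
  have hprod : 1 + ∑ i, W.stations i * W.attemptOdds i ≤
      ∏ i, (1 + W.attemptOdds i) ^ W.stations i :=
    one_add_sum_mul_le_prod_one_add_pow univ W.stations fun i _ => hα i
  have hidle : 0 < W.slotTime / W.collTime := div_pos hσ hT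
  have hsucc : 0 ≤ ∑ i, W.stations i * (W.succTime i / W.collTime) * W.attemptOdds i :=
    sum_nonneg fun i _ =>
      mul_nonneg (mul_nonneg (W.stations i).cast_nonneg (div_nonneg (hTs i) hT.le)) (hα i)
  have hsplit : ∑ i, W.stations i * (W.succTime i / W.collTime - 1) * W.attemptOdds i =
      ∑ i, W.stations i * (W.succTime i / W.collTime) * W.attemptOdds i
        - ∑ i, W.stations i * W.attemptOdds i := by
    simp only [mul_sub_one, sub_mul, sum_sub_distrib]
  rw [normalizedSlotTime, hsplit]
  linarith

end Order

end SlottedChannel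

open SlottedChannel in
theorem flow_airtime_alpha_form_general {ι K : Type*} [Fintype ι] [DecidableEq ι] [Field K]
    (W : SlottedChannel ι K) (hn : ∀ i, W.stations i ≠ 0) (hτ : ∀ i, W.attemptProb i ≠ 1)
    (hT : W.collTime ≠ 0) (hX : W.normalizedSlotTime ≠ 0) (i : ι) :
    W.airTime i = 1 / W.normalizedSlotTime *
      (W.attemptOdds i * (W.succTime i / W.collTime - 1) + W.attemptProb i / W.idleProb) := by
  have hslot := meanSlotTime_eq_idleProb_mul_collTime_mul hn hτ hT
  have hslot_ne : W.meanSlotTime ≠ 0 :=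
    hslot ▸ mul_ne_zero (mul_ne_zero (idleProb_ne_zero hτ) hT) hX
  rw [airTime, div_eq_iff hslot_ne,
    meanFlowTime_eq_idleProb_mul_collTime_mul (hn i) hτ hT, hslot]
  field_simp

/-- With `N ≥ 1` ACs, `n_i ≥ 1` stations per AC, `σ, T^col, T_i^succ > 0`,
attempt probabilities `τ_i ∈ (0,1)` and `α_i = τ_i/(1−τ_i)`, defining `P^idle`, `P_i^succ`,
`P^succ`, `P_i^col` and `X` as in the paper, the flow total air-time
`T_i^air = (P_i^succ T_i^succ + τ_i P_i^col T^col) /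
  (P^idle σ + Σ_j n_j P_j^succ T_j^succ + (1 − P^idle − P^succ) T^col)`
satisfies `T_i^air = (1/X) (α_i (T_i^succ/T^col − 1) + τ_i / P^idle)`. -/
theorem flow_airtime_alpha_form (N : ℕ) (hN : 1 ≤ N) (n : Fin N → ℕ) (hn : ∀ i, 0 < n i)
    (σ Tcol : ℝ) (Ts τ α : Fin N → ℝ)
    (hσ : 0 < σ) (hTcol : 0 < Tcol) (hTs : ∀ i, 0 < Ts i)
    (hτ : ∀ i, τ i ∈ Set.Ioo (0 : ℝ) 1)
    (hα : ∀ i, α i = τ i / (1 - τ i))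
    (Pidle Psucc X : ℝ) (Psucci Picol Tair : Fin N → ℝ)
    (hPidle : Pidle = ∏ i, (1 - τ i) ^ (n i))
    (hPsucci : ∀ i, Psucci i = τ i * (1 - τ i) ^ (n i - 1)
        * ∏ j ∈ Finset.univ.erase i, (1 - τ j) ^ (n j))
    (hPsucc : Psucc = ∑ i, (n i : ℝ) * Psucci i)
    (hPicol : ∀ i, Picol i = 1 - (1 - τ i) ^ (n i - 1)
        * ∏ j ∈ Finset.univ.erase i, (1 - τ j) ^ (n j))
    (hX : X = σ / Tcol + ∑ i, (n i : ℝ) * (Ts i / Tcol - 1) * α i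
        + ∏ i, (1 + α i) ^ (n i) - 1)
    (hTair : ∀ i, Tair i = (Psucci i * Ts i + τ i * Picol i * Tcol)
        / (Pidle * σ + ∑ j, (n j : ℝ) * Psucci j * Ts j + (1 - Pidle - Psucc) * Tcol)) :
    ∀ i, Tair i = (1 / X) * (α i * (Ts i / Tcol - 1) + τ i / Pidle) := by
  obtain rfl : α = fun i => τ i / (1 - τ i) := funext hα
  let W : SlottedChannel (Fin N) ℝ := ⟨n, τ, σ, Tcol, Ts⟩
  have hsucc : Psucci = W.succProb := funext fun i => (hPsucci i).trans (mul_assoc _ _ _)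
  obtain rfl : Picol = W.collProb := funext hPicol
  subst hsucc hPidle hPsucc hX
  have hX : 0 < W.normalizedSlotTime :=
    W.normalizedSlotTime_pos (fun i => Set.Ioo_subset_Ico_self (hτ i)) hσ hTcol fun i => (hTs i).le
  intro i
  rw [hTair]
  exact flow_airtime_alpha_form_general W (fun j => (hn j).ne') (fun j => (hτ j).2.ne)
    hTcol.ne' hX.ne' i
end

section
/- Let N ≥ 1, let n_0,…,n_{N−1} be positive integers, let σ, T^col, T_i^succ (0 ≤ i ≤ N−1) and W_i be real, and let τ_i ∈ (0,1); set α_i = τ_i/(1−τ_i). Fix i and define Y_i = Π_{j≠i} (1+α_j)^{−n_j}, Q_i = Y_i / (1+α_i)^{n_i−1}, P_i^col = 1 − Q_i, Z_i = Σ_{j≠i} (T_j^succ − T^col) n_j α_j, and D_i^bs, D_i^bc as the expected per-slot blocking delays of AC i (D_i^bs = T_i^succ (n_i−1) τ_i (1−τ_i)^{n_i−2} Π_{j≠i}(1−τ_j)^{n_j} + Σ_{j≠i} T_j^succ n_j τ_j (1−τ_j)^{n_j−1} Π_{k≠j,i}(1−τ_k)^{n_k} (1−τ_i)^{n_i−1};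 D_i^bc = T^col (1 − Q_i − (n_i−1)τ_i(1−τ_i)^{n_i−2}Π_{j≠i}(1−τ_j)^{n_j} − Σ_{j≠i} n_j τ_j (1−τ_j)^{n_j−1} Π_{k≠j,i}(1−τ_k)^{n_k}(1−τ_i)^{n_i−1})). Then the average delay with retry limit M = 0, D_i = σ W_i/2 + (W_i/2)(D_i^bs + D_i^bc) + T^col P_i^col + T_i^succ (1 − P_i^col), satisfies D_i = W_i(σ + T^col)/2 + Q_i (T_i^succ − T^col) + T^col + (W_i Q_i / 2) ( Z_i − T^col + (T_i^succ − T^col)(n_i−1) α_i ). -/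
/-!
Since `τ = α (1 - τ)`, exchanging one silent station for an attempting one multiplies a probability
by the odds `α`. So the other stations make a lone attempt with probability `(n_i - 1) α_i Q_i` in
AC `i` and `n_j α_j Q_i` in AC `j ≠ i`. Charging `T^col` to every slot that is not idle, and
correcting by `T_j^succ - T^col` for each lone attempt of AC `j`, writes `D_i^bs + D_i^bc` as
`T^col (1 - Q_i)` plus `Q_i` times a weighted sum of odds.
-/

open Finset

section AttemptOdds

variable {K : Type*} [Field K]

/-- The odds `α = t / (1 - t)` of an attempt made with probability `t`; division by zero gives
`0` at `t = 1`. -/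
def attemptOdds (t : K) : K := t / (1 - t)

theorem attemptOdds_mul_one_sub {t : K} (ht : t ≠ 1) : attemptOdds t * (1 - t) = t :=
  div_mul_cancel₀ t (sub_ne_zero.2 ht.symm)

theorem one_add_attemptOdds {t : K} (ht : t ≠ 1) : 1 + attemptOdds t = (1 - t)⁻¹ :=
  eq_inv_of_mul_eq_one_left (by rw [add_mul, attemptOdds_mul_one_sub ht, one_mul, sub_add_cancel])

theorem natCast_mul_mul_one_sub_pow_pred {t : K} (ht : t ≠ 1) (m : ℕ) :
    m * t * (1 - t) ^ (m - 1) = m * attemptOdds t * (1 - t) ^ m := by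
  cases m with
  | zero => simp
  | succ m =>
    rw [Nat.add_sub_cancel, pow_succ']
    linear_combination -((m + 1 : ℕ) : K) * (1 - t) ^ m * attemptOdds_mul_one_sub ht

end AttemptOdds

section Blocking

variable {ι K : Type*} [Fintype ι] [DecidableEq ι] [Field K]

/-- `Q_i`: the probability that no station other than a tagged station of AC `i` attempts
transmission in a slot. -/
def othersIdleProb (n : ι → ℕ) (τ : ι → K) (i : ι) : K :=
  (1 - τ i) ^ (n i - 1) * ∏ j ∈ univ.erase i, (1 - τ j) ^ n j

/-- The probability that, among the stations other than a tagged one of AC `i`, exactly one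
attempts transmission and it belongs to AC `i`. The exponent `n i - 2` is truncated at `n i = 1`,
where the factor `n i - 1` vanishes. -/
def ownLoneProb (n : ι → ℕ) (τ : ι → K) (i : ι) : K :=
  (n i - 1) * τ i * (1 - τ i) ^ (n i - 2) * ∏ j ∈ univ.erase i, (1 - τ j) ^ n j

/-- The probability that, among the stations other than a tagged one of AC `i`, exactly one
attempts transmission and it belongs to AC `j`. It is meant for `j ≠ i`; see `ownLoneProb` for
`j = i`. -/
def crossLoneProb (n : ι → ℕ) (τ : ι → K) (i j : ι) : K :=
  n j * τ j * (1 - τ j) ^ (n j - 1) * (∏ k ∈ (univ.erase i).erase j, (1 - τ k) ^ n k)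
    * (1 - τ i) ^ (n i - 1)

/-- `D_i^bs`: the expected per-slot delay of AC `i` caused by successful transmissions of other
stations, a success of AC `j` lasting `T j`. -/
def successBlockingDelay (n : ι → ℕ) (τ T : ι → K) (i : ι) : K :=
  T i * ownLoneProb n τ i + ∑ j ∈ univ.erase i, T j * crossLoneProb n τ i j

/-- `D_i^bc`: the expected per-slot delay of AC `i` caused by collisions among other stations, a
collision lasting `Tcol`. -/
def collisionBlockingDelay (n : ι → ℕ) (τ : ι → K) (Tcol : K) (i : ι) : K :=
  Tcol * (1 - othersIdleProb n τ i - ownLoneProb n τ i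
    - ∑ j ∈ univ.erase i, crossLoneProb n τ i j)

variable {n : ι → ℕ} {τ : ι → K}

theorem prod_one_add_attemptOdds_zpow_neg_div (hτ : ∀ j, τ j ≠ 1) (i : ι) :
    (∏ j ∈ univ.erase i, (1 + attemptOdds (τ j)) ^ (-(n j : ℤ)))
      / (1 + attemptOdds (τ i)) ^ (n i - 1) = othersIdleProb n τ i := by
  simp only [one_add_attemptOdds (hτ _), inv_zpow', neg_neg, zpow_natCast, inv_pow,
    div_inv_eq_mul]
  exact mul_comm _ _

theorem ownLoneProb_eq {i : ι} (hn : 0 < n i) (hτ : τ i ≠ 1) :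
    ownLoneProb n τ i = (n i - 1) * attemptOdds (τ i) * othersIdleProb n τ i := by
  have own := natCast_mul_mul_one_sub_pow_pred hτ (n i - 1)
  rw [Nat.cast_pred hn, Nat.sub_sub] at own
  rw [ownLoneProb, own, othersIdleProb, mul_assoc]

theorem crossLoneProb_eq {i j : ι} (hτ : τ j ≠ 1) (hij : j ≠ i) :
    crossLoneProb n τ i j = n j * attemptOdds (τ j) * othersIdleProb n τ i := by
  rw [crossLoneProb, natCast_mul_mul_one_sub_pow_pred hτ, othersIdleProb,
    ← mul_prod_erase _ _ (mem_erase.2 ⟨hij, mem_univ j⟩)]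
  ring

theorem successBlockingDelay_add_collisionBlockingDelay (T : ι → K) (Tcol : K) (i : ι) :
    successBlockingDelay n τ T i + collisionBlockingDelay n τ Tcol i
      = Tcol * (1 - othersIdleProb n τ i)
        + successBlockingDelay n τ (fun j => T j - Tcol) i := by
  simp only [successBlockingDelay, collisionBlockingDelay, sub_mul, sum_sub_distrib, ← mul_sum]
  ring

theorem successBlockingDelay_eq (T : ι → K) {i : ι} (hn : 0 < n i) (hτ : ∀ j, τ j ≠ 1) :
    successBlockingDelay n τ T i = othersIdleProb n τ i
      * (∑ j ∈ univ.erase i, T j * n j * attemptOdds (τ j)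
        + T i * (n i - 1) * attemptOdds (τ i)) := by
  have cross : ∑ j ∈ univ.erase i, T j * crossLoneProb n τ i j
      = (∑ j ∈ univ.erase i, T j * n j * attemptOdds (τ j)) * othersIdleProb n τ i := by
    rw [sum_mul]
    refine sum_congr rfl fun j hj => ?_
    rw [crossLoneProb_eq (hτ j) (ne_of_mem_erase hj)]
    ring
  rw [successBlockingDelay, cross, ownLoneProb_eq hn (hτ i)]
  ring

/-- Here `c` is the mean number of countdown slots, which is `W_i / 2` without retries. -/
theorem average_delay_closed_form_general (T : ι → K) (σ Tcol c : K) {i : ι} (hn : 0 < n i)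
    (hτ : ∀ j, τ j ≠ 1) :
    c * σ + c * (successBlockingDelay n τ T i + collisionBlockingDelay n τ Tcol i)
        + Tcol * (1 - othersIdleProb n τ i) + T i * othersIdleProb n τ i
      = c * (σ + Tcol) + othersIdleProb n τ i * (T i - Tcol) + Tcol
        + c * othersIdleProb n τ i
          * (∑ j ∈ univ.erase i, (T j - Tcol) * n j * attemptOdds (τ j) - Tcol
            + (T i - Tcol) * (n i - 1) * attemptOdds (τ i)) := by
  rw [successBlockingDelay_add_collisionBlockingDelay, successBlockingDelay_eq _ hn hτ]
  ring

end Blocking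

/-- Equation (4) of the paper. With `N ≥ 1` ACs, `n_i ≥ 1` stations per AC,
reals `σ, T^col, T_i^succ, W_i`, attempt probabilities `τ_i ∈ (0,1)` and `α_i = τ_i/(1−τ_i)`,
fixing `i` and defining `Y_i = Π_{j≠i}(1+α_j)^{−n_j}`, `Q_i = Y_i/(1+α_i)^{n_i−1}`,
`P_i^col = 1 − Q_i`, `Z_i`, and the blocking-delay components `D_i^bs`, `D_i^bc` as in the
paper, the average delay with retry limit `M = 0`,
`D_i = σW_i/2 + (W_i/2)(D_i^bs + D_i^bc) + T^col P_i^col + T_i^succ (1 − P_i^col)`, satisfies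
`D_i = W_i(σ+T^col)/2 + Q_i(T_i^succ−T^col) + T^col
      + (W_i Q_i/2)(Z_i − T^col + (T_i^succ−T^col)(n_i−1)α_i)`. -/
theorem average_delay_closed_form (N : ℕ) (hN : 1 ≤ N) (n : Fin N → ℕ) (hn : ∀ i, 0 < n i)
    (σ Tcol Wi : ℝ) (Ts τ α : Fin N → ℝ)
    (hτ : ∀ j, τ j ∈ Set.Ioo (0 : ℝ) 1)
    (hα : ∀ j, α j = τ j / (1 - τ j))
    (i : Fin N) (Yi Qi Picol Zi Dbs Dbc Di : ℝ)
    (hYi : Yi = ∏ j ∈ Finset.univ.erase i, (1 + α j) ^ (-(n j : ℤ)))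
    (hQi : Qi = Yi / (1 + α i) ^ (n i - 1))
    (hPicol : Picol = 1 - Qi)
    (hZi : Zi = ∑ j ∈ Finset.univ.erase i, (Ts j - Tcol) * (n j : ℝ) * α j)
    (hDbs : Dbs = Ts i * ((n i : ℝ) - 1) * τ i * (1 - τ i) ^ (n i - 2)
          * ∏ j ∈ Finset.univ.erase i, (1 - τ j) ^ (n j)
        + ∑ j ∈ Finset.univ.erase i, Ts j * (n j : ℝ) * τ j * (1 - τ j) ^ (n j - 1)
          * (∏ k ∈ (Finset.univ.erase i).erase j, (1 - τ k) ^ (n k))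
          * (1 - τ i) ^ (n i - 1))
    (hDbc : Dbc = Tcol * (1 - Qi
        - ((n i : ℝ) - 1) * τ i * (1 - τ i) ^ (n i - 2)
          * ∏ j ∈ Finset.univ.erase i, (1 - τ j) ^ (n j)
        - ∑ j ∈ Finset.univ.erase i, (n j : ℝ) * τ j * (1 - τ j) ^ (n j - 1)
          * (∏ k ∈ (Finset.univ.erase i).erase j, (1 - τ k) ^ (n k))
          * (1 - τ i) ^ (n i - 1)))
    (hDi : Di = σ * Wi / 2 + (Wi / 2) * (Dbs + Dbc) + Tcol * Picol + Ts i * (1 - Picol)) :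
    Di = Wi * (σ + Tcol) / 2 + Qi * (Ts i - Tcol) + Tcol
        + (Wi * Qi / 2) * (Zi - Tcol + (Ts i - Tcol) * ((n i : ℝ) - 1) * α i) := by
  have hτ_ne : ∀ j, τ j ≠ 1 := fun j => (hτ j).2.ne
  obtain rfl : α = fun j => attemptOdds (τ j) := funext hα
  have hQ : Qi = othersIdleProb n τ i := by
    rw [hQi, hYi, prod_one_add_attemptOdds_zpow_neg_div hτ_ne]
  have hbs : Dbs = successBlockingDelay n τ Ts i := by
    simp only [hDbs, successBlockingDelay, ownLoneProb, crossLoneProb, mul_assoc]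
  have hbc : Dbc = collisionBlockingDelay n τ Tcol i := by
    rw [hDbc, hQ]
    rfl
  rw [hDi, hPicol, hbs, hbc, hQ, hZi]
  linear_combination average_delay_closed_form_general Ts σ Tcol (Wi / 2) (hn i) hτ_ne
end
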